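/- For every even n ≥ 4, the nim-value of graph chomp on the wheel graph W_n is 1. -/

import Mathlib

/-!
The proof is a mirroring argument. Suppose an involution `τ` of the vertices preserves a
position `Δ` and no element of `Δ` contains a vertex `v` together with a different vertex `τ v`.
Then `grundy Δ` equals the Grundy value of the part of `Δ` made of the elements all of whose
vertices are fixed (`grundy_eq_grundy_fixedPart`): a move at an element `σ` that is not fixed
can be answered by the move at `τ σ`, which leads to a position that is again invariant and has
the same fixed part, so such moves never contribute the value of the fixed part.

For even `n = 2h ≥ 4`, the half-turn `i ↦ i + h` of the wheel fixes only the center, and no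
rim vertex is adjacent to its antipode. The fixed part is therefore a single vertex, of value `1`.
-/

attribute [local instance] Classical.propDecidable

/-- The minimal excludant of a finite set of naturals. -/
noncomputable def mex (s : Finset ℕ) : ℕ := sInf {n : ℕ | n ∉ s}

/-- The position resulting from choosing `σ` in subset take-away:
remove `σ` together with every element containing it. -/
noncomputable def takeawayMove {V : Type*} [DecidableEq V] (Δ : Finset (Finset V))
    (σ : Finset V) : Finset (Finset V) :=
  Δ.filter (fun t => ¬ σ ⊆ t)

/-- The Grundy (nim-)value of subset take-away played on `Δ`: the minimal excludant of the
Grundy values of all positions reachable in one move. -/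
noncomputable def grundy {V : Type*} [DecidableEq V] (Δ : Finset (Finset V)) : ℕ :=
  mex (Δ.attach.image (fun σ => grundy (takeawayMove Δ σ.1)))
termination_by Δ.card
decreasing_by
  simp only [takeawayMove]
  exact Finset.card_lt_card (Finset.filter_ssubset.mpr ⟨σ.1, σ.2, by simp⟩)

/-- The simplicial complex of vertices and edges of a finite simple graph `G`.
Graph chomp on `G` is subset take-away on this complex, so the nim-value of graph chomp
on `G` is `grundy (graphComplex G)`. -/
noncomputable def graphComplex {V : Type*} [Fintype V] [DecidableEq V] (G : SimpleGraph V) :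
    Finset (Finset V) :=
  (Finset.univ : Finset V).image (fun v => ({v} : Finset V)) ∪
    Finset.univ.filter (fun s : Finset V => ∃ u v, G.Adj u v ∧ s = {u, v})

/-- The wheel graph `W_n`: an `n`-cycle (on `Fin n`, with `i` adjacent to `i + 1 mod n`)
together with a center vertex (`none`) joined by an edge to every cycle vertex. -/
def wheelGraph (n : ℕ) : SimpleGraph (Option (Fin n)) :=
  SimpleGraph.fromRel (fun u v =>
    u = none ∨ ∃ i j : Fin n, u = some i ∧ v = some j ∧ j.val = (i.val + 1) % n)

lemma mex_notMem (s : Finset ℕ) : mex s ∉ s := by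
  have h : {n : ℕ | n ∉ s}.Nonempty := Infinite.exists_notMem_finset s
  exact Nat.sInf_mem h

lemma mem_of_lt_mex {s : Finset ℕ} {k : ℕ} (h : k < mex s) : k ∈ s := by
  by_contra hk
  exact Nat.notMem_of_lt_sInf h hk

lemma mex_eq {s : Finset ℕ} {g : ℕ} (hg : g ∉ s) (hlt : ∀ k < g, k ∈ s) : mex s = g := by
  rcases lt_trichotomy (mex s) g with h | h | h
  · exact absurd (hlt _ h) (mex_notMem s)
  · exact h
  · exact absurd (mem_of_lt_mex h) hg

section Game

variable {V : Type*} [DecidableEq V]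

lemma mem_takeawayMove {Δ : Finset (Finset V)} {σ t : Finset V} :
    t ∈ takeawayMove Δ σ ↔ t ∈ Δ ∧ ¬ σ ⊆ t := by
  simp [takeawayMove]

lemma card_takeawayMove_lt {Δ : Finset (Finset V)} {σ : Finset V} (h : σ ∈ Δ) :
    (takeawayMove Δ σ).card < Δ.card := by
  unfold takeawayMove
  exact Finset.card_lt_card (Finset.filter_ssubset.mpr ⟨σ, h, by simp⟩)

lemma grundy_move_ne {Δ : Finset (Finset V)} {σ : Finset V} (h : σ ∈ Δ) :
    grundy (takeawayMove Δ σ) ≠ grundy Δ := by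
  intro he
  rw [grundy.eq_1 Δ] at he
  refine mex_notMem (Δ.attach.image (fun σ => grundy (takeawayMove Δ σ.1))) ?_
  rw [← he]
  exact Finset.mem_image.mpr ⟨⟨σ, h⟩, Finset.mem_attach _ _, rfl⟩

lemma exists_move_of_lt {Δ : Finset (Finset V)} {k : ℕ} (h : k < grundy Δ) :
    ∃ σ ∈ Δ, grundy (takeawayMove Δ σ) = k := by
  rw [grundy.eq_1 Δ] at h
  obtain ⟨σ, -, hσ⟩ := Finset.mem_image.mp (mem_of_lt_mex h)
  exact ⟨σ.1, σ.2, hσ⟩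

lemma grundy_eq {Δ : Finset (Finset V)} {g : ℕ}
    (hne : ∀ σ ∈ Δ, grundy (takeawayMove Δ σ) ≠ g)
    (hlt : ∀ k < g, ∃ σ ∈ Δ, grundy (takeawayMove Δ σ) = k) : grundy Δ = g := by
  rw [grundy.eq_1 Δ]
  refine mex_eq ?_ fun k hk => ?_
  · intro h
    obtain ⟨σ, -, hσ⟩ := Finset.mem_image.mp h
    exact hne σ.1 σ.2 hσ
  · obtain ⟨σ, hσ, he⟩ := hlt k hk
    exact Finset.mem_image.mpr ⟨⟨σ, hσ⟩, Finset.mem_attach _ _, he⟩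

/-- The elements of `Δ` all of whose vertices are fixed by `τ`. -/
noncomputable def fixedPart (τ : V → V) (Δ : Finset (Finset V)) : Finset (Finset V) :=
  Δ.filter (fun s => ∀ v ∈ s, τ v = v)

lemma mem_fixedPart {τ : V → V} {Δ : Finset (Finset V)} {s : Finset V} :
    s ∈ fixedPart τ Δ ↔ s ∈ Δ ∧ ∀ v ∈ s, τ v = v := by
  simp [fixedPart]

lemma image_eq_self_of_fixed {τ : V → V} {s : Finset V} (h : ∀ v ∈ s, τ v = v) :
    s.image τ = s := by
  rw [Finset.image_congr (g := id) (fun v hv => h v hv), Finset.image_id]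

lemma image_image_of_involutive {τ : V → V} (hτ : Function.Involutive τ) (s : Finset V) :
    (s.image τ).image τ = s := by
  rw [Finset.image_image, hτ.comp_self, Finset.image_id]

/-- The mirroring principle: an involution `τ` of the vertices that preserves `Δ`, and for which
no element of `Δ` contains a vertex together with a distinct mirror image, does not change the
Grundy value when `Δ` is cut down to its fixed part. -/
theorem grundy_eq_grundy_fixedPart {τ : V → V} (hτ : Function.Involutive τ)
    (Δ : Finset (Finset V)) (hinv : ∀ s ∈ Δ, s.image τ ∈ Δ)
    (hsep : ∀ s ∈ Δ, ∀ v ∈ s, τ v ∈ s → τ v = v) :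
    grundy Δ = grundy (fixedPart τ Δ) := by
  induction hc : Δ.card using Nat.strong_induction_on generalizing Δ with
  | _ c ih =>
  subst hc
  have himg : ∀ s t : Finset V, s.image τ ⊆ t → s ⊆ t.image τ := fun s t h => by
    simpa only [image_image_of_involutive hτ] using Finset.image_subset_image (f := τ) h
  -- A move inside the fixed part commutes with taking fixed parts.
  have hfix : ∀ σ ∈ fixedPart τ Δ,
      grundy (takeawayMove Δ σ) = grundy (takeawayMove (fixedPart τ Δ) σ) := by
    intro σ hσ
    obtain ⟨hσΔ, hσf⟩ := mem_fixedPart.mp hσ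
    have key := ih _ (card_takeawayMove_lt hσΔ) (takeawayMove Δ σ)
      (fun s hs => by
        obtain ⟨hs, hns⟩ := mem_takeawayMove.mp hs
        refine mem_takeawayMove.mpr ⟨hinv s hs, fun h => hns ?_⟩
        have h2 := himg σ (s.image τ) ((image_eq_self_of_fixed hσf).symm ▸ h)
        rwa [image_image_of_involutive hτ] at h2)
      (fun s hs => hsep s (mem_takeawayMove.mp hs).1) rfl
    rw [key]
    congr 1
    ext t
    simp only [mem_fixedPart, mem_takeawayMove]
    tauto
  refine grundy_eq (fun σ hσ => ?_) (fun k hk => ?_)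
  · by_cases hσf : σ ∈ fixedPart τ Δ
    · rw [hfix σ hσf]
      exact grundy_move_ne hσf
    · have hnf : ¬ ∀ v ∈ σ, τ v = v := fun h => hσf (mem_fixedPart.mpr ⟨hσ, h⟩)
      have hmem : σ.image τ ∈ takeawayMove Δ σ := by
        refine mem_takeawayMove.mpr ⟨hinv σ hσ, fun h => hnf fun v hv => ?_⟩
        have heq : σ = σ.image τ := Finset.eq_of_subset_of_card_le h Finset.card_image_le
        refine hsep σ hσ v hv ?_
        rw [heq]
        exact Finset.mem_image_of_mem τ hv
      have key := ih _ ((card_takeawayMove_lt hmem).trans (card_takeawayMove_lt hσ))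
        (takeawayMove (takeawayMove Δ σ) (σ.image τ))
        (fun s hs => by
          simp only [mem_takeawayMove] at hs ⊢
          refine ⟨⟨hinv s hs.1.1, fun h => hs.2 ?_⟩, fun h => hs.1.2 ?_⟩
          · simpa only [image_image_of_involutive hτ] using Finset.image_subset_image (f := τ) h
          · simpa only [image_image_of_involutive hτ] using himg _ _ h)
        (fun s hs => hsep s (mem_takeawayMove.mp (mem_takeawayMove.mp hs).1).1) rfl
      have hsame : fixedPart τ (takeawayMove (takeawayMove Δ σ) (σ.image τ)) = fixedPart τ Δ := by
        ext t
        simp only [mem_fixedPart, mem_takeawayMove]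
        refine ⟨fun h => ⟨h.1.1.1, h.2⟩, fun h => ⟨⟨⟨h.1, fun hs => ?_⟩, fun hs => ?_⟩, h.2⟩⟩
        · exact hnf fun v hv => h.2 v (hs hv)
        · refine hnf fun v hv => h.2 v ?_
          have h2 := himg _ _ hs hv
          rwa [image_eq_self_of_fixed h.2] at h2
      rw [hsame] at key
      rw [← key]
      exact (grundy_move_ne hmem).symm
  · obtain ⟨σ, hσ, he⟩ := exists_move_of_lt hk
    exact ⟨σ, (mem_fixedPart.mp hσ).1, (hfix σ hσ).trans he⟩

lemma grundy_empty : grundy (∅ : Finset (Finset V)) = 0 :=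
  grundy_eq (by simp) (by simp)

lemma grundy_single (v : V) : grundy ({{v}} : Finset (Finset V)) = 1 := by
  have h : takeawayMove ({{v}} : Finset (Finset V)) {v} = ∅ := by
    ext t
    rw [mem_takeawayMove]
    aesop
  refine grundy_eq (fun σ hσ => ?_) (fun k hk => ⟨{v}, by simp, ?_⟩)
  · rw [Finset.mem_singleton.mp hσ, h, grundy_empty]
    exact zero_ne_one
  · rw [h, grundy_empty]
    omega

end Game

lemma mem_graphComplex {V : Type*} [Fintype V] [DecidableEq V] {G : SimpleGraph V}
    {s : Finset V} :
    s ∈ graphComplex G ↔ (∃ v, s = {v}) ∨ ∃ u v, G.Adj u v ∧ s = {u, v} := by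
  simp [graphComplex, eq_comm]

/-- The half-turn of the wheel with `h + h` rim vertices: the center is fixed and every rim
vertex goes to its antipode. -/
def halfTurn (h : ℕ) : Option (Fin (h + h)) → Option (Fin (h + h)) :=
  Option.map fun i => if hi : i.val < h then ⟨i.val + h, by omega⟩ else ⟨i.val - h, by omega⟩

lemma halfTurn_involutive (h : ℕ) : Function.Involutive (halfTurn h) := by
  rintro (_ | i)
  · rfl
  · simp only [halfTurn, Option.map_some, Option.some.injEq, Fin.ext_iff]
    by_cases hi : i.val < h
    · simp [hi]
    · have : i.val - h < h := by omega
      simp [hi, this]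
      omega

lemma halfTurn_some_ne {h : ℕ} (i : Fin (h + h)) : halfTurn h (some i) ≠ some i := by
  simp only [halfTurn, Option.map_some, ne_eq, Option.some.injEq, Fin.ext_iff]
  split_ifs <;> simp <;> omega

lemma succ_mod_eq {n i : ℕ} (hi : i < n) : (i + 1) % n = if i + 1 = n then 0 else i + 1 := by
  split_ifs with h
  · rw [h, Nat.mod_self]
  · exact Nat.mod_eq_of_lt (by omega)

lemma wheelGraph_adj_some {n : ℕ} {i j : Fin n} :
    (wheelGraph n).Adj (some i) (some j) ↔
      i ≠ j ∧ (j.val = (i.val + 1) % n ∨ i.val = (j.val + 1) % n) := by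
  simp [wheelGraph]

lemma wheelGraph_adj_halfTurn {h : ℕ} {u v : Option (Fin (h + h))}
    (huv : (wheelGraph (h + h)).Adj u v) :
    (wheelGraph (h + h)).Adj (halfTurn h u) (halfTurn h v) := by
  rcases u with _ | i <;> rcases v with _ | j
  · exact absurd huv (SimpleGraph.irrefl _)
  · simp [wheelGraph, halfTurn]
  · simp [wheelGraph, halfTurn]
  · simp only [halfTurn, Option.map_some]
    rw [wheelGraph_adj_some] at huv ⊢
    obtain ⟨hne, hadj⟩ := huv
    rw [ne_eq, Fin.ext_iff] at hne ⊢
    rw [succ_mod_eq i.2, succ_mod_eq j.2] at hadj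
    rw [succ_mod_eq (Fin.is_lt _), succ_mod_eq (Fin.is_lt _)]
    have := i.2
    have := j.2
    by_cases hi : i.val < h <;> by_cases hj : j.val < h <;>
      simp only [hi, hj, dite_true, dite_false] <;> split_ifs at * <;> omega

lemma not_adj_halfTurn {h : ℕ} (hh : 2 ≤ h) (u : Option (Fin (h + h))) :
    ¬ (wheelGraph (h + h)).Adj u (halfTurn h u) := by
  rcases u with _ | i
  · exact SimpleGraph.irrefl _
  · simp only [halfTurn, Option.map_some]
    rw [wheelGraph_adj_some]
    rintro ⟨-, hadj⟩
    rw [succ_mod_eq (Fin.is_lt _), succ_mod_eq (Fin.is_lt _)] at hadj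
    have := i.2
    by_cases hi : i.val < h <;> simp only [hi, dite_true, dite_false] at hadj <;>
      split_ifs at hadj <;> omega

/-- For every even `n ≥ 4`, the nim-value of graph chomp on the wheel
graph `W_n` is `1`. -/
theorem grundy_wheelGraph_even (n : ℕ) (hn : 4 ≤ n) (heven : Even n) :
    grundy (graphComplex (wheelGraph n)) = 1 := by
  obtain ⟨h, rfl⟩ := heven
  rw [grundy_eq_grundy_fixedPart (halfTurn_involutive h)]
  · have hfixed : fixedPart (halfTurn h) (graphComplex (wheelGraph (h + h))) = {{none}} := by
      have hnone : ∀ v, halfTurn h v = v → v = none := by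
        rintro (_ | i) hv
        · rfl
        · exact absurd hv (halfTurn_some_ne i)
      ext s
      rw [mem_fixedPart, mem_graphComplex, Finset.mem_singleton]
      constructor
      · rintro ⟨⟨v, rfl⟩ | ⟨u, v, huv, rfl⟩, hs⟩
        · rw [hnone v (hs v (by simp))]
        · rw [hnone u (hs u (by simp)), hnone v (hs v (by simp))] at huv
          exact absurd huv (SimpleGraph.irrefl _)
      · rintro rfl
        exact ⟨Or.inl ⟨none, rfl⟩, by simp [halfTurn]⟩
    rw [hfixed, grundy_single]
  · intro s hs
    rw [mem_graphComplex] at hs ⊢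
    rcases hs with ⟨v, rfl⟩ | ⟨u, v, huv, rfl⟩
    · exact Or.inl ⟨_, Finset.image_singleton _ _⟩
    · exact Or.inr ⟨_, _, wheelGraph_adj_halfTurn huv, by simp [Finset.image_insert]⟩
  · intro s hs w hw hw'
    rcases mem_graphComplex.mp hs with ⟨v, rfl⟩ | ⟨u, v, huv, rfl⟩
    · rw [Finset.mem_singleton.mp hw', Finset.mem_singleton.mp hw]
    · simp only [Finset.mem_insert, Finset.mem_singleton] at hw hw'
      have hnot := not_adj_halfTurn (h := h) (by omega) w
      rcases hw with rfl | rfl <;> rcases hw' with hw' | hw'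
      · exact hw'
      · exact absurd (hw' ▸ huv) hnot
      · exact absurd (hw' ▸ huv.symm) hnot
      · exact hw'
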